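/- Let 𝚫 ∈ 𝒜 and α ∈ Δ₁. Then α is a branch arrow if and only if α ∉ 𝒞_𝚫, and α is a cycle arrow if and only if α ∈ 𝒞_𝚫. -/

import Mathlib

/-! Common formalization infrastructure for gentle quivers (Bobinski–Buan,
    "Derived equivalence classification of gentle cluster tilted algebras"). -/

/-- A (finite) quiver with (length-two, monomial) relations.  Vertices and
arrows are natural numbers; `V` and `A` are the finite sets of vertices and
arrows, `src`/`tgt` give the start and terminus of each arrow, and `rel` is the
set of relations, a relation `(a, b)` standing for the length-two path
`a·b` (so `src a = tgt b`). -/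
structure QuivRel where
  V : Finset ℕ
  A : Finset ℕ
  src : ℕ → ℕ
  tgt : ℕ → ℕ
  rel : Finset (ℕ × ℕ)

namespace GentleQuiv

/-- Two vertices are adjacent if some arrow joins them (in either direction). -/
def Adj (Q : QuivRel) (x y : ℕ) : Prop :=
  ∃ a ∈ Q.A, (Q.src a = x ∧ Q.tgt a = y) ∨ (Q.src a = y ∧ Q.tgt a = x)

/-- A quiver is connected if any two of its vertices are joined by a walk. -/
def Connected (Q : QuivRel) : Prop :=
  ∀ x ∈ Q.V, ∀ y ∈ Q.V, Relation.ReflTransGen (Adj Q) x y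

/-- `l = [α₁, …, αₙ]` is a (nonempty) path in the quiver: consecutive arrows
compose, i.e. `s αᵢ = t αᵢ₊₁`. -/
def IsPathList (Q : QuivRel) (l : List ℕ) : Prop :=
  l ≠ [] ∧ (∀ a ∈ l, a ∈ Q.A) ∧ l.Chain' (fun a b => Q.src a = Q.tgt b)

/-- The path `l` contains a subpath (two consecutive arrows) lying in `R`. -/
def HasRelSubpath (Q : QuivRel) (l : List ℕ) : Prop :=
  ∃ a b, (a, b) ∈ Q.rel ∧ [a, b] <:+: l

/-- Gentle quiver: connected, relations are composable pairs of arrows, at most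
two arrows in/out of every vertex, the usual gentleness conditions on
relations, and a global bound forcing finite dimensionality. -/
def IsGentle (Q : QuivRel) : Prop :=
  Q.V.Nonempty ∧
  (∀ a ∈ Q.A, Q.src a ∈ Q.V ∧ Q.tgt a ∈ Q.V) ∧
  Connected Q ∧
  (∀ ρ ∈ Q.rel, ρ.1 ∈ Q.A ∧ ρ.2 ∈ Q.A ∧ Q.src ρ.1 = Q.tgt ρ.2) ∧
  (∀ x, (Q.A.filter fun a => Q.src a = x).card ≤ 2) ∧
  (∀ x, (Q.A.filter fun a => Q.tgt a = x).card ≤ 2) ∧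
  (∀ a ∈ Q.A, (Q.A.filter fun b => Q.src b = Q.tgt a ∧ (b, a) ∉ Q.rel).card ≤ 1) ∧
  (∀ a ∈ Q.A, (Q.A.filter fun c => Q.tgt c = Q.src a ∧ (a, c) ∉ Q.rel).card ≤ 1) ∧
  (∀ a ∈ Q.A, (Q.A.filter fun b => (b, a) ∈ Q.rel).card ≤ 1) ∧
  (∀ a ∈ Q.A, (Q.A.filter fun c => (a, c) ∈ Q.rel).card ≤ 1) ∧
  (∃ n : ℕ, ∀ l : List ℕ, IsPathList Q l → l.length = n → HasRelSubpath Q l)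

/-- A choice of functions `σ, τ : Δ₁ → {±1}` as in Avella-Alaminos–Geiss. -/
structure SigmaTau (Q : QuivRel) where
  σ : ℕ → ℤ
  τ : ℕ → ℤ
  σ_pm : ∀ a ∈ Q.A, σ a = 1 ∨ σ a = -1
  τ_pm : ∀ a ∈ Q.A, τ a = 1 ∨ τ a = -1
  σ_src : ∀ a ∈ Q.A, ∀ b ∈ Q.A, a ≠ b → Q.src a = Q.src b → σ a = -σ b
  τ_tgt : ∀ a ∈ Q.A, ∀ b ∈ Q.A, a ≠ b → Q.tgt a = Q.tgt b → τ a = -τ b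
  rel_iff : ∀ a ∈ Q.A, ∀ b ∈ Q.A, Q.src a = Q.tgt b → ((a, b) ∈ Q.rel ↔ σ a = τ b)

/-- A thread: either a trivial path/antipath `1_{x,ε}` at a vertex `x` with a
sign `ε`, or a sequence of arrows of positive length. -/
inductive Thread where
  | triv (x : ℕ) (ε : ℤ) : Thread
  | arrows (l : List ℕ) : Thread
deriving DecidableEq

/-- Source of a thread. -/
def Thread.source (Q : QuivRel) : Thread → ℕ
  | .triv x _ => x
  | .arrows l => Q.src l.getLast!

/-- Target of a thread. -/
def Thread.target (Q : QuivRel) : Thread → ℕ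
  | .triv x _ => x
  | .arrows l => Q.tgt l.head!

/-- `σω` (for paths and antipaths alike; `σ 1_{x,ε} = ε = σ 1'_{x,ε}`). -/
def Thread.sigma {Q : QuivRel} (st : SigmaTau Q) : Thread → ℤ
  | .triv _ ε => ε
  | .arrows l => st.σ l.getLast!

/-- `τω` when `ω` is regarded as a path (`τ 1_{x,ε} = -ε`). -/
def Thread.tauPath {Q : QuivRel} (st : SigmaTau Q) : Thread → ℤ
  | .triv _ ε => -ε
  | .arrows l => st.τ l.head!

/-- `τω` when `ω` is regarded as an antipath (`τ 1'_{x,ε} = ε`). -/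
def Thread.tauAnti {Q : QuivRel} (st : SigmaTau Q) : Thread → ℤ
  | .triv _ ε => ε
  | .arrows l => st.τ l.head!

/-- Length of a thread. -/
def Thread.len : Thread → ℕ
  | .triv _ _ => 0
  | .arrows l => l.length

/-- A path in `𝚫` of positive length (no two consecutive arrows in `R`). -/
def IsPermList (Q : QuivRel) (l : List ℕ) : Prop :=
  IsPathList Q l ∧ l.Chain' (fun a b => (a, b) ∉ Q.rel)

/-- An antipath in `𝚫` of positive length (all consecutive pairs in `R`). -/
def IsAntiList (Q : QuivRel) (l : List ℕ) : Prop :=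
  l ≠ [] ∧ (∀ a ∈ l, a ∈ Q.A) ∧ l.Chain' (fun a b => (a, b) ∈ Q.rel)

/-- A thread is a path in `𝚫` (including trivial ones). -/
def IsPathThread (Q : QuivRel) : Thread → Prop
  | .triv x ε => x ∈ Q.V ∧ (ε = 1 ∨ ε = -1)
  | .arrows l => IsPermList Q l

/-- A thread is an antipath in `𝚫` (including trivial ones). -/
def IsAntiThread (Q : QuivRel) : Thread → Prop
  | .triv x ε => x ∈ Q.V ∧ (ε = 1 ∨ ε = -1)
  | .arrows l => IsAntiList Q l

/-- `w ∈ ℳ`: `w` is a maximal path of `𝚫`. -/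
def InM (Q : QuivRel) (st : SigmaTau Q) (w : Thread) : Prop :=
  IsPathThread Q w ∧
  (¬ ∃ a ∈ Q.A, Q.src a = w.target Q ∧ st.σ a = -(w.tauPath st)) ∧
  (¬ ∃ b ∈ Q.A, Q.tgt b = w.source Q ∧ st.τ b = -(w.sigma st))

/-- `w ∈ 𝒩`: `w` is a maximal antipath of `𝚫`. -/
def InN (Q : QuivRel) (st : SigmaTau Q) (w : Thread) : Prop :=
  IsAntiThread Q w ∧
  (¬ ∃ a ∈ Q.A, Q.src a = w.target Q ∧ st.σ a = w.tauAnti st) ∧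
  (¬ ∃ b ∈ Q.A, Q.tgt b = w.source Q ∧ st.τ b = w.sigma st)

/-- The graph of the bijection `Φ = φ ∘ ψ : 𝒩 → 𝒩`:  `PhiRel Q st w w'` holds
iff `w, w' ∈ 𝒩` and the maximal path `ψ w` (with `s(ψw) = sw`, `σ(ψw) = -σw`)
satisfies `t w' = t (ψ w)` and `τ w' = -τ(ψ w)`, i.e. `w' = φ (ψ w) = Φ w`. -/
def PhiRel (Q : QuivRel) (st : SigmaTau Q) (w w' : Thread) : Prop :=
  InN Q st w ∧ InN Q st w' ∧
  ∃ m : Thread, InM Q st m ∧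
    m.source Q = w.source Q ∧ m.sigma st = -(w.sigma st) ∧
    w'.target Q = m.target Q ∧ w'.tauAnti st = -(m.tauPath st)

/-- `O` is an orbit of the `ℤ`-action on `𝒩` induced by `Φ`. -/
def NOrbit (Q : QuivRel) (st : SigmaTau Q) (O : Set Thread) : Prop :=
  ∃ w, InN Q st w ∧ O = {w' | Relation.EqvGen (PhiRel Q st) w w'}

/-- `p(𝒪) = |𝒪|` for an orbit `𝒪 ∈ 𝒩/ℤ`. -/
noncomputable def pN (O : Set Thread) : ℕ := O.ncard

/-- `q(𝒪) = Σ_{ω ∈ 𝒪} ℓ(ω)` for an orbit `𝒪 ∈ 𝒩/ℤ`. -/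
noncomputable def qN (O : Set Thread) : ℕ := ∑ᶠ w ∈ O, Thread.len w

/-- `a ∈ 𝒞`: the arrow `a` occurs in no maximal antipath. -/
def InC (Q : QuivRel) (st : SigmaTau Q) (a : ℕ) : Prop :=
  a ∈ Q.A ∧ ¬ ∃ l : List ℕ, InN Q st (.arrows l) ∧ a ∈ l

/-- The graph of the bijection `Ψ : 𝒞 → 𝒞`. -/
def PsiRel (Q : QuivRel) (st : SigmaTau Q) (a b : ℕ) : Prop :=
  InC Q st a ∧ InC Q st b ∧ Q.tgt b = Q.src a ∧ st.τ b = st.σ a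

/-- `O` is an orbit of the `ℤ`-action on `𝒞` induced by `Ψ`. -/
def COrbit (Q : QuivRel) (st : SigmaTau Q) (O : Set ℕ) : Prop :=
  ∃ a, InC Q st a ∧ O = {b | Relation.EqvGen (PsiRel Q st) a b}

/-- The Avella-Alaminos–Geiss invariant `f_𝚫 : ℕ² → ℕ`:  `f_𝚫 (p,q)` counts the
orbits `𝒪 ∈ 𝒩/ℤ ⊔ 𝒞/ℤ` with `p(𝒪) = p` and `q(𝒪) = q`. -/
noncomputable def fInv (Q : QuivRel) (st : SigmaTau Q) : ℕ × ℕ → ℕ := fun pq =>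
  {O : Set Thread | NOrbit Q st O ∧ pN O = pq.1 ∧ qN O = pq.2}.ncard +
  {O : Set ℕ | COrbit Q st O ∧ pq.1 = 0 ∧ O.ncard = pq.2}.ncard

/-- `[p, q] : ℕ² → ℕ`, the characteristic function of `{(p, q)}`. -/
def charFn (p q : ℕ) : ℕ × ℕ → ℕ := fun pq => if pq = (p, q) then 1 else 0

/-- Tree type: `|Δ₀| = |Δ₁| + 1`. -/
def TreeType (Q : QuivRel) : Prop := Q.V.card = Q.A.card + 1

/-- Removing a set of arrows (keeping all vertices); relations containing a
removed arrow are discarded. -/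
def deleteArrows (Q : QuivRel) (S : Finset ℕ) : QuivRel where
  V := Q.V
  A := Q.A \ S
  src := Q.src
  tgt := Q.tgt
  rel := Q.rel.filter fun ρ => ρ.1 ∉ S ∧ ρ.2 ∉ S

/-- Branch arrow: removing it disconnects the quiver. -/
def BranchArrow (Q : QuivRel) (a : ℕ) : Prop :=
  a ∈ Q.A ∧ ¬ Connected (deleteArrows Q {a})

/-- Cycle arrow: removing it leaves the quiver connected. -/
def CycleArrow (Q : QuivRel) (a : ℕ) : Prop :=
  a ∈ Q.A ∧ Connected (deleteArrows Q {a})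

/-- Branch relation: a relation one of whose arrows is a branch arrow. -/
def BranchRel (Q : QuivRel) (ρ : ℕ × ℕ) : Prop :=
  ρ ∈ Q.rel ∧ (BranchArrow Q ρ.1 ∨ BranchArrow Q ρ.2)

/-- A relation `ρ = (α, β)` is isolated if the antipath `(α, β)` is a maximal
antipath, i.e. `ρ ∈ 𝒩`. -/
def Isolated (Q : QuivRel) (st : SigmaTau Q) (ρ : ℕ × ℕ) : Prop :=
  ρ ∈ Q.rel ∧ InN Q st (.arrows [ρ.1, ρ.2])

/-- `Q'` is obtained from `Q` by completing the relations from `R₀`, the new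
arrow attached to `ρ ∈ R₀` being `γ ρ`. -/
structure IsCompletion (Q : QuivRel) (R0 : Finset (ℕ × ℕ)) (γ : ℕ × ℕ → ℕ)
    (Q' : QuivRel) : Prop where
  subset : R0 ⊆ Q.rel
  fresh : ∀ ρ ∈ R0, γ ρ ∉ Q.A
  inj : ∀ ρ ∈ R0, ∀ ρ' ∈ R0, γ ρ = γ ρ' → ρ = ρ'
  V_eq : Q'.V = Q.V
  A_eq : Q'.A = Q.A ∪ R0.image γ
  src_old : ∀ a ∈ Q.A, Q'.src a = Q.src a
  tgt_old : ∀ a ∈ Q.A, Q'.tgt a = Q.tgt a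
  src_new : ∀ ρ ∈ R0, Q'.src (γ ρ) = Q.tgt ρ.1
  tgt_new : ∀ ρ ∈ R0, Q'.tgt (γ ρ) = Q.src ρ.2
  rel_eq : Q'.rel = Q.rel ∪ R0.image (fun ρ => (γ ρ, ρ.1)) ∪
      R0.image (fun ρ => (ρ.2, γ ρ))

/-- A 3-cycle: three pairwise distinct arrows forming an oriented cycle. -/
def Is3Cycle (Q : QuivRel) (a0 a1 a2 : ℕ) : Prop :=
  a0 ∈ Q.A ∧ a1 ∈ Q.A ∧ a2 ∈ Q.A ∧ a0 ≠ a1 ∧ a1 ≠ a2 ∧ a0 ≠ a2 ∧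
  Q.src a0 = Q.tgt a1 ∧ Q.src a1 = Q.tgt a2 ∧ Q.src a2 = Q.tgt a0

/-- A triangle: a 3-cycle all of whose three compositions are relations. -/
def IsTriangleTriple (Q : QuivRel) (a0 a1 a2 : ℕ) : Prop :=
  Is3Cycle Q a0 a1 a2 ∧ (a0, a1) ∈ Q.rel ∧ (a1, a2) ∈ Q.rel ∧ (a2, a0) ∈ Q.rel

/-- The (unordered) set of arrows of a triangle. -/
def TriangleSet (Q : QuivRel) (O : Finset ℕ) : Prop :=
  ∃ a0 a1 a2, O = {a0, a1, a2} ∧ IsTriangleTriple Q a0 a1 a2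

/-- Branch triangle: removing any two of its arrows disconnects the quiver. -/
def BranchTriangle (Q : QuivRel) (O : Finset ℕ) : Prop :=
  TriangleSet Q O ∧ ∀ S ⊆ O, S.card = 2 → ¬ Connected (deleteArrows Q S)

/-- Free relation: a relation neither of whose arrows lies in `𝒞`. -/
def FreeRel (Q : QuivRel) (st : SigmaTau Q) (ρ : ℕ × ℕ) : Prop :=
  ρ ∈ Q.rel ∧ ¬ InC Q st ρ.1 ∧ ¬ InC Q st ρ.2

/-- The class `𝒜`: gentle quivers with `f_𝚫 = m·[0,3] + [p+m+2, p]`. -/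
def ClassA (Q : QuivRel) (st : SigmaTau Q) : Prop :=
  IsGentle Q ∧ ∃ m p : ℕ, ∀ x, fInv Q st x = m * charFn 0 3 x + charFn (p + m + 2) p x

/-- The class `Ã`: gentle quivers with
`f_𝚫 = (m₁+m₂)·[0,3] + [p+m₁, p] + [q+m₂, q]`, `p+m₁ > 0`, `q+m₂ > 0`. -/
def ClassAtilde (Q : QuivRel) (st : SigmaTau Q) : Prop :=
  IsGentle Q ∧ ∃ m1 m2 p q : ℕ, 0 < p + m1 ∧ 0 < q + m2 ∧
    ∀ x, fInv Q st x =
      (m1 + m2) * charFn 0 3 x + charFn (p + m1) p x + charFn (q + m2) q x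

/-- Isomorphism of quivers with relations. -/
def IsoQR (Q Q' : QuivRel) : Prop :=
  ∃ fV fA : ℕ → ℕ,
    Set.BijOn fV ↑Q.V ↑Q'.V ∧ Set.BijOn fA ↑Q.A ↑Q'.A ∧
    (∀ a ∈ Q.A, Q'.src (fA a) = fV (Q.src a) ∧ Q'.tgt (fA a) = fV (Q.tgt a)) ∧
    (∀ a ∈ Q.A, ∀ b ∈ Q.A, ((a, b) ∈ Q.rel ↔ (fA a, fA b) ∈ Q'.rel))

/-- The quiver has no loops. -/
def NoLoops (Q : QuivRel) : Prop := ∀ a ∈ Q.A, Q.src a ≠ Q.tgt a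

/-- The reflection at `x` is defined: every arrow starting at `x` admits a
(necessarily unique) companion arrow ending at `x` not bound by a relation. -/
def CanReflect (Q : QuivRel) (x : ℕ) : Prop :=
  x ∈ Q.V ∧ ∀ a ∈ Q.A, Q.src a = x → ∃ b ∈ Q.A, Q.tgt b = x ∧ (a, b) ∉ Q.rel

/-- `Q'` is the reflection of the gentle loop-free quiver `Q` at the vertex
`x`, following Brenner–Butler tilting. -/
def IsReflection (Q : QuivRel) (x : ℕ) (Q' : QuivRel) : Prop :=
  IsGentle Q ∧ NoLoops Q ∧ CanReflect Q x ∧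
  Q'.V = Q.V ∧ Q'.A = Q.A ∧
  (∀ a ∈ Q.A, Q.tgt a = x → Q'.src a = x ∧ Q'.tgt a = Q.src a) ∧
  (∀ a ∈ Q.A, Q.src a = x →
    ∀ b ∈ Q.A, Q.tgt b = x → (a, b) ∉ Q.rel → Q'.src a = Q.src b) ∧
  (∀ a ∈ Q.A, Q.tgt a ≠ x → Q.src a ≠ x → Q'.src a = Q.src a) ∧
  (∀ a ∈ Q.A, Q.tgt a ≠ x →
    ((∃ b ∈ Q.A, Q.tgt b = x ∧ Q.src b = Q.tgt a ∧ (b, a) ∈ Q.rel) → Q'.tgt a = x) ∧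
    ((¬ ∃ b ∈ Q.A, Q.tgt b = x ∧ Q.src b = Q.tgt a ∧ (b, a) ∈ Q.rel) →
      Q'.tgt a = Q.tgt a)) ∧
  (∀ a b : ℕ, (a, b) ∈ Q'.rel ↔
    (((a, b) ∈ Q.rel ∧ Q.tgt a ≠ x ∧ Q.src a ≠ x) ∨
     (a ∈ Q.A ∧ b ∈ Q.A ∧ Q.src a = x ∧ Q.tgt b = x ∧ (a, b) ∉ Q.rel) ∨
     (a ∈ Q.A ∧ b ∈ Q.A ∧ Q.tgt a = x ∧
       ∃ c ∈ Q.A, c ≠ a ∧ Q.tgt c = x ∧ Q.src c = Q.tgt b ∧ (c, b) ∈ Q.rel)))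

/-- The opposite quiver with relations. -/
def opQR (Q : QuivRel) : QuivRel where
  V := Q.V
  A := Q.A
  src := Q.tgt
  tgt := Q.src
  rel := Q.rel.image fun ρ => (ρ.2, ρ.1)

/-- Coreflection: the dual of reflection. -/
def IsCoreflection (Q : QuivRel) (x : ℕ) (Q' : QuivRel) : Prop :=
  IsReflection (opQR Q) x (opQR Q')

/-- One step of reflection equivalence: a reflection, a coreflection, or an
isomorphism of quivers with relations. -/
def RefStep (Q Q' : QuivRel) : Prop :=
  (∃ x, IsReflection Q x Q') ∨ (∃ x, IsCoreflection Q x Q') ∨ IsoQR Q Q'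

/-- Reflection equivalence: a finite sequence of reflections/coreflections,
up to isomorphism of quivers with relations. -/
def RefEquiv : QuivRel → QuivRel → Prop := Relation.ReflTransGen RefStep

/-- A cyclic orientation of a `1`-cycle quiver without branch arrows (i.e. a
cycle): enumerations of the vertices and arrows by `ZMod n` such that the
`i`-th arrow joins the `i`-th and `(i+1)`-st vertices. -/
structure CyclicOrientation (Q : QuivRel) (n : ℕ) where
  ev : ZMod n → ℕ
  ea : ZMod n → ℕ
  ev_mem : ∀ i, ev i ∈ Q.V
  ea_mem : ∀ i, ea i ∈ Q.A
  ev_inj : Function.Injective ev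
  ea_inj : Function.Injective ea
  ev_surj : ∀ v ∈ Q.V, ∃ i, ev i = v
  ea_surj : ∀ a ∈ Q.A, ∃ i, ea i = a
  compat : ∀ i : ZMod n,
    (Q.src (ea i) = ev i ∧ Q.tgt (ea i) = ev (i + 1)) ∨
    (Q.src (ea i) = ev (i + 1) ∧ Q.tgt (ea i) = ev i)

/-- Clockwise arrow with respect to a cyclic orientation. -/
def Clockwise (Q : QuivRel) {n : ℕ} (co : CyclicOrientation Q n) (a : ℕ) : Prop :=
  a ∈ Q.A ∧ ∃ i : ZMod n, co.ea i = a ∧ Q.src a = co.ev i ∧ Q.tgt a = co.ev (i + 1)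

/-- Anticlockwise arrow with respect to a cyclic orientation. -/
def Anticlockwise (Q : QuivRel) {n : ℕ} (co : CyclicOrientation Q n) (a : ℕ) : Prop :=
  a ∈ Q.A ∧ ∃ i : ZMod n, co.ea i = a ∧ Q.src a = co.ev (i + 1) ∧ Q.tgt a = co.ev i

end GentleQuiv

namespace GentleQuiv

section aux

variable {Q : QuivRel} {st : SigmaTau Q}

theorem src_inj (st : SigmaTau Q) {a b : ℕ} (ha : a ∈ Q.A) (hb : b ∈ Q.A) (h : Q.src a = Q.src b)
    (h' : st.σ a = st.σ b) : a = b := by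
  by_contra hne
  have h1 := st.σ_src a ha b hb hne h
  have h2 := st.σ_pm b hb
  omega

theorem tgt_inj (st : SigmaTau Q) {a b : ℕ} (ha : a ∈ Q.A) (hb : b ∈ Q.A) (h : Q.tgt a = Q.tgt b)
    (h' : st.τ a = st.τ b) : a = b := by
  by_contra hne
  have h1 := st.τ_tgt a ha b hb hne h
  have h2 := st.τ_pm b hb
  omega

/-- Relations in terms of signs. -/
theorem rel_iff' (hg : IsGentle Q) (st : SigmaTau Q) (a b : ℕ) : (a, b) ∈ Q.rel ↔
    a ∈ Q.A ∧ b ∈ Q.A ∧ Q.src a = Q.tgt b ∧ st.σ a = st.τ b := by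
  constructor
  · intro h
    obtain ⟨h1, h2, h3⟩ := hg.2.2.2.1 _ h
    exact ⟨h1, h2, h3, (st.rel_iff a h1 b h2 h3).1 h⟩
  · rintro ⟨h1, h2, h3, h4⟩
    exact (st.rel_iff a h1 b h2 h3).2 h4

theorem rel_right (hg : IsGentle Q) (st : SigmaTau Q) {a b c : ℕ} (h : (a, b) ∈ Q.rel)
    (h' : (a, c) ∈ Q.rel) : b = c := by
  rw [rel_iff' hg st] at h h'
  exact tgt_inj st h.2.1 h'.2.1 (by rw [← h.2.2.1, ← h'.2.2.1]) (by rw [← h.2.2.2, ← h'.2.2.2])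

theorem rel_left (hg : IsGentle Q) (st : SigmaTau Q) {a b c : ℕ} (h : (a, c) ∈ Q.rel)
    (h' : (b, c) ∈ Q.rel) : a = b := by
  rw [rel_iff' hg st] at h h'
  exact src_inj st h.1 h'.1 (by rw [h.2.2.1, h'.2.2.1]) (by rw [h.2.2.2, h'.2.2.2])

/-- Maximal antipaths of positive length, in terms of relations. -/
theorem inN_arrows (hg : IsGentle Q) (st : SigmaTau Q) (h : ℕ) (t : List ℕ) :
    InN Q st (.arrows (h :: t)) ↔ IsAntiList Q (h :: t) ∧ (∀ a, (a, h) ∉ Q.rel) ∧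
      (∀ b, ((h :: t).getLast (by simp), b) ∉ Q.rel) := by
  have e : (h :: t).getLast! = (h :: t).getLast (by simp) := rfl
  simp only [InN, IsAntiThread, Thread.target, Thread.source, Thread.tauAnti, Thread.sigma, e,
    List.head!_cons]
  constructor
  · rintro ⟨h1, h2, h3⟩
    refine ⟨h1, fun a ha => h2 ?_, fun b hb => h3 ?_⟩
    · rw [rel_iff' hg st] at ha
      exact ⟨a, ha.1, ha.2.2.1, ha.2.2.2⟩
    · rw [rel_iff' hg st] at hb
      exact ⟨b, hb.2.1, hb.2.2.1.symm, hb.2.2.2.symm⟩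
  · rintro ⟨h1, h2, h3⟩
    refine ⟨h1, ?_, ?_⟩
    · rintro ⟨a, ha, ha1, ha2⟩
      exact h2 a ((rel_iff' hg st _ _).2 ⟨ha, h1.2.1 h (by simp), ha1, ha2⟩)
    · rintro ⟨a, ha, ha1, ha2⟩
      exact h3 a ((rel_iff' hg st _ _).2 ⟨h1.2.1 _ (List.getLast_mem _), ha, ha1.symm, ha2.symm⟩)

theorem tail_unique (hg : IsGentle Q) (st : SigmaTau Q) (t : List ℕ) : ∀ (h : ℕ) (t' : List ℕ),
    (h :: t).IsChain (fun a b => (a, b) ∈ Q.rel) → (h :: t').IsChain (fun a b => (a, b) ∈ Q.rel) →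
    (∀ b, ((h :: t).getLast (by simp), b) ∉ Q.rel) →
    (∀ b, ((h :: t').getLast (by simp), b) ∉ Q.rel) → t = t' := by
  induction t with
  | nil =>
    intro h t' _ h2 h3 _
    cases t' with
    | nil => rfl
    | cons x t' =>
      rw [List.isChain_cons_cons] at h2
      exact absurd h2.1 (h3 x)
  | cons y t ih =>
    intro h t' h1 h2 h3 h4
    cases t' with
    | nil =>
      rw [List.isChain_cons_cons] at h1
      exact absurd h1.1 (h4 y)
    | cons x t' =>
      rw [List.isChain_cons_cons] at h1 h2
      obtain rfl := rel_right hg st h1.1 h2.1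
      rw [ih y t' h1.2 h2.2 (by simpa using h3) (by simpa using h4)]

theorem chain_succ {R : ℕ → ℕ → Prop} (l : List ℕ) (hl : l ≠ []) (hc : l.IsChain R) (x : ℕ)
    (hx : x ∈ l) : x = l.getLast hl ∨ ∃ y ∈ l.tail, R x y := by
  induction l with
  | nil => simp at hl
  | cons h t ih =>
    cases t with
    | nil => left; simpa using hx
    | cons k t =>
      rw [List.isChain_cons_cons] at hc
      rcases List.mem_cons.1 hx with rfl | hx
      · right; exact ⟨k, by simp, hc.1⟩
      · rcases ih (by simp) hc.2 hx with h | ⟨y, hy, hxy⟩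
        · left; simpa using h
        · right; exact ⟨y, by simp at hy ⊢; exact Or.inr hy, hxy⟩

theorem chain_pred {R : ℕ → ℕ → Prop} (h : ℕ) (t : List ℕ) (hc : (h :: t).IsChain R) (x : ℕ)
    (hx : x ∈ h :: t) : x = h ∨ ∃ y ∈ h :: t, R y x := by
  induction t generalizing h with
  | nil => left; simpa using hx
  | cons k t ih =>
    rw [List.isChain_cons_cons] at hc
    rcases List.mem_cons.1 hx with rfl | hx
    · left; rfl
    · right
      rcases ih k hc.2 hx with rfl | ⟨y, hy, hxy⟩
      · exact ⟨h, by simp, hc.1⟩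
      · exact ⟨y, List.mem_cons_of_mem _ hy, hxy⟩

/-- An arrow without successor lies in a maximal antipath. -/
theorem exists_max (hg : IsGentle Q) (st : SigmaTau Q) {a : ℕ} (ha : a ∈ Q.A)
    (hno : ∀ b, (a, b) ∉ Q.rel) : ∃ l, InN Q st (.arrows l) ∧ a ∈ l := by
  by_contra hcon
  have key : ∀ n : ℕ, ∃ h t, (h :: t).length = n + 1 ∧ (h :: t).Nodup ∧ IsAntiList Q (h :: t) ∧
      (h :: t).getLast (by simp) = a := by
    intro n
    induction n with
    | zero => exact ⟨a, [], by simp, by simp, ⟨by simp, by simpa using ha, List.isChain_singleton _⟩, rfl⟩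
    | succ n ih =>
      obtain ⟨h, t, hlen, hnd, hanti, hlast⟩ := ih
      have : ∃ x, (x, h) ∈ Q.rel := by
        by_contra hx
        push Not at hx
        refine hcon ⟨h :: t, (inN_arrows hg st h t).2 ⟨hanti, hx, by rw [hlast]; exact hno⟩, ?_⟩
        rw [← hlast]; exact List.getLast_mem _
      obtain ⟨x, hx⟩ := this
      refine ⟨x, h :: t, by simp at hlen ⊢; omega, ?_, ?_, by simpa using hlast⟩
      · rw [List.nodup_cons]
        refine ⟨fun hmem => ?_, hnd⟩
        rcases chain_succ (h :: t) (by simp) hanti.2.2 x hmem with e | ⟨y, hy, hxy⟩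
        · rw [e, hlast] at hx
          exact hno _ hx
        · rw [← rel_right hg st hx hxy] at hy
          exact (List.nodup_cons.1 hnd).1 hy
      · refine ⟨by simp, ?_, ?_⟩
        · intro b hb
          rcases List.mem_cons.1 hb with rfl | hb
          · exact (hg.2.2.2.1 _ hx).1
          · exact hanti.2.1 b hb
        · exact List.isChain_cons_cons.2 ⟨hx, hanti.2.2⟩
  obtain ⟨h, t, hlen, hnd, hanti, -⟩ := key Q.A.card
  have h1 : (h :: t).toFinset ⊆ Q.A := fun b hb => hanti.2.1 b (List.mem_toFinset.1 hb)
  have h2 := Finset.card_le_card h1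
  rw [List.toFinset_card_of_nodup hnd] at h2
  omega

theorem inC_succ (hg : IsGentle Q) {a b : ℕ} (hC : InC Q st a) (h : (a, b) ∈ Q.rel) :
    InC Q st b := by
  refine ⟨(hg.2.2.2.1 _ h).2.1, ?_⟩
  rintro ⟨l, hl, hb⟩
  apply hC.2
  refine ⟨l, hl, ?_⟩
  cases l with
  | nil => simp at hb
  | cons k t =>
    obtain ⟨h1, h2, h3⟩ := (inN_arrows hg st k t).1 hl
    rcases chain_pred k t h1.2.2 b hb with rfl | ⟨y, hy, hyb⟩
    · exact absurd h (h2 a)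
    · rwa [rel_left hg st h hyb]

theorem exists_psi (hg : IsGentle Q) {a : ℕ} (hC : InC Q st a) :
    ∃ b, InC Q st b ∧ (a, b) ∈ Q.rel := by
  by_contra h
  push Not at h
  exact hC.2 (exists_max hg st hC.1 fun b hb => h b (inC_succ hg hC hb) hb)

theorem psi_of_rel (hg : IsGentle Q) {a b : ℕ} (ha : InC Q st a) (hb : InC Q st b)
    (h : (a, b) ∈ Q.rel) : PsiRel Q st a b := by
  rw [rel_iff' hg st] at h
  exact ⟨ha, hb, h.2.2.1.symm, h.2.2.2.symm⟩

/-- Adjacency through arrows of a given set. -/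
def AdjS (Q : QuivRel) (B : Set ℕ) (x y : ℕ) : Prop :=
  ∃ a ∈ B, (Q.src a = x ∧ Q.tgt a = y) ∨ (Q.src a = y ∧ Q.tgt a = x)

theorem adjS_symm {B : Set ℕ} : Std.Symm (AdjS Q B) := by
  constructor
  rintro x y ⟨a, ha, h⟩
  exact ⟨a, ha, h.symm⟩

theorem rtg_symm {B : Set ℕ} {x y : ℕ} (h : Relation.ReflTransGen (AdjS Q B) x y) :
    Relation.ReflTransGen (AdjS Q B) y x := by
  induction h with
  | refl => exact .refl
  | tail _ h ih => exact .head (adjS_symm.symm _ _ h) ih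

theorem lift_conn {B B' : Set ℕ}
    (hB : ∀ a ∈ B, Relation.ReflTransGen (AdjS Q B') (Q.src a) (Q.tgt a)) {x y : ℕ}
    (h : Relation.ReflTransGen (AdjS Q B) x y) : Relation.ReflTransGen (AdjS Q B') x y := by
  induction h with
  | refl => exact .refl
  | tail _ h ih =>
    obtain ⟨a, ha, ⟨rfl, rfl⟩ | ⟨rfl, rfl⟩⟩ := h
    · exact ih.trans (hB a ha)
    · exact ih.trans (rtg_symm (hB a ha))

/-- The endpoints of an arrow in `𝒞` are joined by the other arrows of its orbit. -/
theorem walk (hg : IsGentle Q) {a : ℕ} (hC : InC Q st a) {B : Set ℕ}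
    (hB : ∀ b, InC Q st b → Relation.EqvGen (PsiRel Q st) a b → b ≠ a → b ∈ B) :
    Relation.ReflTransGen (AdjS Q B) (Q.src a) (Q.tgt a) := by
  have hex : ∀ c : {c // InC Q st c}, ∃ b : {c // InC Q st c}, (c.1, b.1) ∈ Q.rel := by
    rintro ⟨c, hc⟩
    obtain ⟨b, hb, h⟩ := exists_psi hg hc
    exact ⟨⟨b, hb⟩, h⟩
  choose f hf using hex
  have hinj : Function.Injective f := by
    intro x y hxy
    apply Subtype.ext
    have h1 := hf x
    rw [hxy] at h1
    exact rel_left hg st h1 (hf y)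
  have : Finite {c // InC Q st c} :=
    Set.Finite.to_subtype (s := {c | InC Q st c}) (Q.A.finite_toSet.subset fun c hc => hc.1)
  have hper := hinj.mem_periodicPts ⟨a, hC⟩
  set n := Function.minimalPeriod f ⟨a, hC⟩ with hn
  have hpos : 0 < n := Function.minimalPeriod_pos_of_mem_periodicPts hper
  have hst : ∀ i, (((f^[i] ⟨a, hC⟩ : {c // InC Q st c}) : ℕ),
      ((f^[i+1] ⟨a, hC⟩ : {c // InC Q st c}) : ℕ)) ∈ Q.rel := by
    intro i
    rw [Function.iterate_succ_apply']
    exact hf _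
  have hsrc := fun i => ((rel_iff' hg st _ _).1 (hst i)).2.2.1
  have hgen : ∀ i, Relation.EqvGen (PsiRel Q st) a (f^[i] ⟨a, hC⟩ : {c // InC Q st c}) := by
    intro i
    induction i with
    | zero => exact .refl _
    | succ i ih =>
      exact .trans _ _ _ ih (.rel _ _ (psi_of_rel hg (Subtype.prop _) (Subtype.prop _) (hst i)))
  have hwalk : ∀ i, i < n → Relation.ReflTransGen (AdjS Q B) (Q.src a)
      (Q.src (f^[i] ⟨a, hC⟩ : {c // InC Q st c})) := by
    intro i
    induction i with
    | zero => intro _; exact .refl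
    | succ i ih =>
      intro hi
      refine (ih (by omega)).tail ⟨_, hB _ (Subtype.prop _) (hgen (i+1)) ?_, Or.inr ⟨rfl, (hsrc i).symm⟩⟩
      intro he
      have hp : Function.IsPeriodicPt f (i+1) ⟨a, hC⟩ := Subtype.ext he
      have := hp.minimalPeriod_le (by omega)
      omega
  have h1 := hwalk (n-1) (by omega)
  rw [hsrc (n-1), show n - 1 + 1 = n by omega, hn, Function.iterate_minimalPeriod] at h1
  exact h1

/-- A connected graph has at least `|V| - 1` edges. -/
theorem card_bound {B : Finset ℕ} (hne : Q.V.Nonempty)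
    (hV : ∀ a ∈ B, Q.src a ∈ Q.V ∧ Q.tgt a ∈ Q.V)
    (hc : ∀ x ∈ Q.V, ∀ y ∈ Q.V, Relation.ReflTransGen (AdjS Q B) x y) :
    Q.V.card ≤ B.card + 1 := by
  classical
  let G : SimpleGraph Q.V := SimpleGraph.fromRel fun x y => AdjS Q B x y
  have hreach : ∀ x : Q.V, ∀ y, Relation.ReflTransGen (AdjS Q B) x y → ∃ hy : y ∈ Q.V,
      G.Reachable x ⟨y, hy⟩ := by
    intro x y h
    induction h with
    | refl => exact ⟨x.2, SimpleGraph.Reachable.refl _⟩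
    | @tail y z _ h ih =>
      obtain ⟨hy, ih⟩ := ih
      have hz : z ∈ Q.V := by
        obtain ⟨a, ha, ⟨rfl, rfl⟩ | ⟨rfl, rfl⟩⟩ := h
        exacts [(hV a ha).2, (hV a ha).1]
      refine ⟨hz, ih.trans ?_⟩
      by_cases e : y = z
      · subst e; exact SimpleGraph.Reachable.refl _
      · apply SimpleGraph.Adj.reachable
        rw [SimpleGraph.fromRel_adj]
        exact ⟨fun h => e (congrArg Subtype.val h), Or.inl h⟩
  have hG : G.Connected := by
    rw [SimpleGraph.connected_iff]
    refine ⟨fun x y => (hreach x y (hc x x.2 y y.2)).2, ⟨⟨hne.choose, hne.choose_spec⟩⟩⟩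
  have h1 := hG.card_vert_le_card_edgeSet_add_one
  have h2 : Nat.card G.edgeSet ≤ B.card := by
    have hsub : G.edgeSet ⊆ Set.range fun a : B =>
        (s(⟨Q.src a, (hV a a.2).1⟩, ⟨Q.tgt a, (hV a a.2).2⟩) : Sym2 Q.V) := by
      intro e
      induction e using Sym2.ind with
      | _ x y =>
        intro h
        rw [SimpleGraph.mem_edgeSet, SimpleGraph.fromRel_adj] at h
        have h' : AdjS Q B x y := h.2.elim id (fun h => adjS_symm.symm _ _ h)
        obtain ⟨a, ha, h⟩ := h'
        refine ⟨⟨a, ha⟩, ?_⟩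
        rw [Sym2.eq_iff]
        rcases h with h | h
        · left; exact ⟨Subtype.ext h.1, Subtype.ext h.2⟩
        · right; exact ⟨Subtype.ext h.1, Subtype.ext h.2⟩
    calc Nat.card G.edgeSet ≤ Nat.card (Set.range fun a : B =>
        (s(⟨Q.src a, (hV a a.2).1⟩, ⟨Q.tgt a, (hV a a.2).2⟩) : Sym2 Q.V)) :=
          Nat.card_mono (Set.finite_range _) hsub
      _ ≤ Nat.card B := Finite.card_range_le _
      _ = B.card := by simp
  have h3 : Nat.card Q.V = Q.V.card := by simp
  omega

/-- The set of maximal antipaths is determined by target data. -/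
theorem N_inj (hg : IsGentle Q) (st : SigmaTau Q) :
    Set.InjOn (fun w : Thread => (w.target Q, w.tauAnti st)) {w | InN Q st w} := by
  have aux : ∀ x ε h t, InN Q st (.triv x ε) → InN Q st (.arrows (h :: t)) →
      Q.tgt h = x → st.τ h = ε → False := by
    intro x ε h t h1 h2 h3 h4
    exact h1.2.2 ⟨h, h2.1.2.1 h (by simp), h3, h4⟩
  rintro (⟨x, ε⟩ | l) hw (⟨y, δ⟩ | l') hw' heq
  · simp [Thread.target, Thread.tauAnti] at heq
    rw [heq.1, heq.2]
  · cases l' with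
    | nil => exact absurd rfl hw'.1.1
    | cons h t =>
      simp [Thread.target, Thread.tauAnti] at heq
      exact (aux x ε h t hw hw' heq.1.symm heq.2.symm).elim
  · cases l with
    | nil => exact absurd rfl hw.1.1
    | cons h t =>
      simp [Thread.target, Thread.tauAnti] at heq
      exact (aux y δ h t hw' hw heq.1 heq.2).elim
  · cases l with
    | nil => exact absurd rfl hw.1.1
    | cons h t =>
      cases l' with
      | nil => exact absurd rfl hw'.1.1
      | cons h' t' =>
        simp [Thread.target, Thread.tauAnti] at heq
        obtain rfl := tgt_inj st (hw.1.2.1 h (by simp)) (hw'.1.2.1 h' (by simp)) heq.1 heq.2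
        have h1 := (inN_arrows hg st h t).1 hw
        have h2 := (inN_arrows hg st h t').1 hw'
        rw [tail_unique hg st t h t' h1.1.2.2 h2.1.2.2 h1.2.2 h2.2.2]

/-- `|𝒩| + |A| ≤ 2 |V|`, and `𝒩` is finite. -/
theorem N_card (hg : IsGentle Q) (st : SigmaTau Q) :
    {w | InN Q st w}.Finite ∧ {w | InN Q st w}.ncard + Q.A.card ≤ 2 * Q.V.card := by
  classical
  let P : Finset (ℕ × ℤ) := Q.V ×ˢ {1, -1}
  let I : Finset (ℕ × ℤ) := Q.A.image fun a => (Q.src a, st.σ a)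
  have hI : I.card = Q.A.card := by
    apply Finset.card_image_of_injOn
    intro a ha b hb h
    simp at h
    exact src_inj st ha hb h.1 h.2
  have hIP : I ⊆ P := by
    intro z hz
    obtain ⟨a, ha, rfl⟩ := Finset.mem_image.1 hz
    simp only [P, Finset.mem_product, Finset.mem_insert, Finset.mem_singleton]
    exact ⟨(hg.2.1 a ha).1, st.σ_pm a ha⟩
  have hP : P.card = 2 * Q.V.card := by
    simp [P, Finset.card_product]; ring
  have hmaps : Set.MapsTo (fun w : Thread => (w.target Q, w.tauAnti st)) {w | InN Q st w}
      (↑(P \ I) : Set (ℕ × ℤ)) := by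
    intro w hw
    simp only [Finset.coe_sdiff, Set.mem_sdiff, Finset.mem_coe]
    constructor
    · simp only [P, Finset.mem_product, Finset.mem_insert, Finset.mem_singleton]
      rcases w with ⟨x, ε⟩ | l
      · exact hw.1
      · cases l with
        | nil => exact absurd rfl hw.1.1
        | cons h t =>
          have hh := hw.1.2.1 h (by simp)
          exact ⟨(hg.2.1 h hh).2, st.τ_pm h hh⟩
    · intro hmem
      obtain ⟨a, ha, h⟩ := Finset.mem_image.1 hmem
      simp only [Prod.mk.injEq] at h
      exact hw.2.1 ⟨a, ha, h⟩
  have hfin : {w | InN Q st w}.Finite :=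
    Set.Finite.of_injOn hmaps (N_inj hg st) (Finset.finite_toSet _)
  refine ⟨hfin, ?_⟩
  have h1 := Set.ncard_le_ncard_of_injOn _ hmaps (N_inj hg st) (Finset.finite_toSet _)
  rw [Set.ncard_coe_finset, Finset.card_sdiff_of_subset hIP] at h1
  have := Finset.card_le_card hIP
  omega

theorem N_eqv {w w' : Thread} (h : Relation.EqvGen (PhiRel Q st) w w') :
    InN Q st w ↔ InN Q st w' := by
  induction h with
  | rel _ _ h => exact ⟨fun _ => h.2.1, fun _ => h.1⟩
  | refl => exact Iff.rfl
  | symm _ _ _ ih => exact ih.symm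
  | trans _ _ _ _ _ ih1 ih2 => exact ih1.trans ih2

theorem C_eqv {w w' : ℕ} (h : Relation.EqvGen (PsiRel Q st) w w') :
    InC Q st w ↔ InC Q st w' := by
  induction h with
  | rel _ _ h => exact ⟨fun _ => h.2.1, fun _ => h.1⟩
  | refl => exact Iff.rfl
  | symm _ _ _ ih => exact ih.symm
  | trans _ _ _ _ _ ih1 ih2 => exact ih1.trans ih2

/-- Counting consequences of membership in the class `𝒜`. -/
theorem classA_count (hA : ClassA Q st) : ∃ m : ℕ,
    (∃ S : Finset (Set ℕ), S.card = m ∧ (∀ O, O ∈ S ↔ COrbit Q st O)) ∧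
    Q.A.card + 1 ≤ Q.V.card + m := by
  classical
  obtain ⟨hg, m, p, hf⟩ := hA
  obtain ⟨hNfin, hNcard⟩ := N_card hg st
  have hCfin : {c | InC Q st c}.Finite := Q.A.finite_toSet.subset fun c hc => hc.1
  have hNsub : ∀ O, NOrbit Q st O → O ⊆ {w | InN Q st w} := by
    rintro O ⟨w, hw, rfl⟩ w' hw'
    exact (N_eqv hw').1 hw
  have hCsub : ∀ O, COrbit Q st O → O ⊆ {w | InC Q st w} := by
    rintro O ⟨w, hw, rfl⟩ w' hw'
    exact (C_eqv hw').1 hw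
  have hNOfin : {O | NOrbit Q st O}.Finite := hNfin.finite_subsets.subset hNsub
  have hCOfin : {O | COrbit Q st O}.Finite := hCfin.finite_subsets.subset hCsub
  have hNpos : ∀ O, NOrbit Q st O → 0 < pN O := by
    intro O hO
    refine (Set.ncard_pos (hNfin.subset (hNsub O hO))).2 ?_
    obtain ⟨w, hw, rfl⟩ := hO
    exact ⟨w, .refl _⟩
  -- the unique orbit
  have hNval : ∀ O, NOrbit Q st O → pN O = p + m + 2 ∧ qN O = p := by
    intro O hO
    have h1 := hf (pN O, qN O)
    have h2 : 0 < {O' : Set Thread | NOrbit Q st O' ∧ pN O' = pN O ∧ qN O' = qN O}.ncard :=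
      (Set.ncard_pos (hNOfin.subset fun _ h => h.1)).2 ⟨O, hO, rfl, rfl⟩
    have h3 := hNpos O hO
    simp only [fInv, charFn, Prod.mk.injEq] at h1
    rw [if_neg (by omega)] at h1
    split_ifs at h1 with h4
    · exact h4
    · omega
  have hN1 : {O : Set Thread | NOrbit Q st O}.ncard = 1 := by
    have h1 := hf (p + m + 2, p)
    simp only [fInv, charFn, Prod.mk.injEq] at h1
    rw [if_neg (by omega)] at h1
    simp at h1
    have hset : {O : Set Thread | NOrbit Q st O} =
        {O : Set Thread | NOrbit Q st O ∧ pN O = p + m + 2 ∧ qN O = p} := by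
      ext O
      exact ⟨fun h => ⟨h, hNval O h⟩, fun h => h.1⟩
    rw [Set.ncard_eq_one, hset]
    exact h1
  obtain ⟨O, hO⟩ := Set.ncard_eq_one.1 hN1
  have hOo : NOrbit Q st O := by
    have : O ∈ {O : Set Thread | NOrbit Q st O} := by rw [hO]; rfl
    exact this
  have hON : O = {w | InN Q st w} := by
    apply Set.Subset.antisymm (hNsub O hOo)
    intro w hw
    have : {w' | Relation.EqvGen (PhiRel Q st) w w'} ∈ {O : Set Thread | NOrbit Q st O} :=
      ⟨w, hw, rfl⟩
    rw [hO, Set.mem_singleton_iff] at this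
    rw [← this]
    exact .refl _
  obtain ⟨hp, hq⟩ := hNval O hOo
  -- the orbits in C
  have hC3 : ∀ O, COrbit Q st O → O.ncard = 3 := by
    intro O hO
    by_contra hne
    have h1 := hf (0, O.ncard)
    have h2 : 0 < {O' : Set ℕ | COrbit Q st O' ∧ True ∧ O'.ncard = O.ncard}.ncard :=
      (Set.ncard_pos (hCOfin.subset fun _ h => h.1)).2 ⟨O, hO, trivial, rfl⟩
    simp only [fInv, charFn, Prod.mk.injEq] at h1
    rw [if_neg (by omega), if_neg (by omega)] at h1
    simp only [true_and] at h1 h2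
    omega
  have hCm : hCOfin.toFinset.card = m := by
    have h1 := hf (0, 3)
    simp only [fInv, charFn, Prod.mk.injEq] at h1
    rw [if_pos (by simp), if_neg (by omega)] at h1
    have h2 : {O : Set Thread | NOrbit Q st O ∧ pN O = 0 ∧ qN O = 3} = ∅ := by
      ext O
      simp only [Set.mem_ofPred_eq, Set.mem_empty_iff_false, iff_false]
      rintro ⟨h, h', -⟩
      have := hNpos O h
      omega
    rw [h2, Set.ncard_empty] at h1
    rw [← Set.ncard_eq_toFinset_card _ hCOfin]
    have h3 : {O : Set ℕ | COrbit Q st O ∧ True ∧ O.ncard = 3} = {O | COrbit Q st O} := by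
      ext O
      exact ⟨fun h => h.1, fun h => ⟨h, trivial, hC3 O h⟩⟩
    rw [h3] at h1
    omega
  refine ⟨m, ⟨hCOfin.toFinset, hCm, by simp⟩, ?_⟩
  -- count arrows
  have hcover : Q.A ⊆ (hCOfin.toFinset.biUnion fun O => Q.A.filter (· ∈ O)) ∪
      (hNfin.toFinset.biUnion fun w => match w with
        | .triv _ _ => ∅
        | .arrows l => l.toFinset) := by
    intro a ha
    rw [Finset.mem_union]
    by_cases hC : InC Q st a
    · left
      rw [Finset.mem_biUnion]
      exact ⟨{b | Relation.EqvGen (PsiRel Q st) a b}, by simpa using ⟨a, hC, rfl⟩,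
        Finset.mem_filter.2 ⟨ha, .refl _⟩⟩
    · right
      have : ∃ l : List ℕ, InN Q st (.arrows l) ∧ a ∈ l := by
        by_contra h; exact hC ⟨ha, h⟩
      obtain ⟨l, hl, hal⟩ := this
      rw [Finset.mem_biUnion]
      exact ⟨.arrows l, by simpa using hl, by simpa using hal⟩
  have h1 : (hCOfin.toFinset.biUnion fun O => Q.A.filter (· ∈ O)).card ≤ m * 3 := by
    rw [← hCm]
    apply Finset.card_biUnion_le_card_mul
    intro O hO
    have hO : COrbit Q st O := by simpa using hO
    rw [← hC3 O hO, ← Set.ncard_coe_finset]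
    exact Set.ncard_le_ncard (by intro x; simp) (hCfin.subset (hCsub O hO))
  have h2 : (hNfin.toFinset.biUnion fun w => match w with
        | .triv _ _ => ∅
        | .arrows l => l.toFinset).card ≤ p := by
    refine Finset.card_biUnion_le.trans ?_
    rw [← hq, qN, hON, finsum_mem_eq_finite_toFinset_sum _ hNfin]
    apply Finset.sum_le_sum
    rintro (⟨x, ε⟩ | l) -
    · simp
    · exact List.toFinset_card_le l
  have h3 := (Finset.card_le_card hcover).trans (Finset.card_union_le _ _)
  rw [← hON] at hNcard
  have : pN O = O.ncard := rfl
  omega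

theorem delete_conn (a : ℕ) : Connected (deleteArrows Q {a}) ↔
    ∀ x ∈ Q.V, ∀ y ∈ Q.V, Relation.ReflTransGen (AdjS Q {b | b ∈ Q.A ∧ b ≠ a}) x y := by
  have : Adj (deleteArrows Q {a}) = AdjS Q {b | b ∈ Q.A ∧ b ≠ a} := by
    ext x y
    simp [Adj, AdjS, deleteArrows]
  simp only [Connected, this]
  rfl

theorem cycle_of_inC (hg : IsGentle Q) {a : ℕ} (hC : InC Q st a) :
    Connected (deleteArrows Q {a}) := by
  rw [delete_conn]
  intro x hx y hy
  have h : Relation.ReflTransGen (AdjS Q {b | b ∈ Q.A}) x y := hg.2.2.1 x hx y hy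
  refine lift_conn (fun b hb => ?_) h
  by_cases e : b = a
  · subst e
    exact walk hg hC fun c hc _ hne => ⟨hc.1, hne⟩
  · exact .single ⟨b, ⟨hb, e⟩, Or.inl ⟨rfl, rfl⟩⟩

theorem inC_of_cycle (hA : ClassA Q st) {a : ℕ} (ha : a ∈ Q.A)
    (hconn : Connected (deleteArrows Q {a})) : InC Q st a := by
  classical
  by_contra hC
  obtain ⟨m, ⟨S, hSm, hS⟩, hcount⟩ := classA_count hA
  have hg := hA.1
  rw [delete_conn] at hconn
  have hch : ∀ O : S, ∃ c, InC Q st c ∧ O.1 = {b | Relation.EqvGen (PsiRel Q st) c b} := by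
    rintro ⟨O, hO⟩
    exact (hS O).1 hO
  choose c hc hcO using hch
  have hcinj : Function.Injective c := by
    intro O O' h
    apply Subtype.ext
    rw [hcO O, hcO O', h]
  let X : Finset ℕ := S.attach.image c
  have hX : X.card = m := by
    rw [Finset.card_image_of_injective _ hcinj, Finset.card_attach, hSm]
  have hXA : insert a X ⊆ Q.A := by
    intro b hb
    rcases Finset.mem_insert.1 hb with rfl | hb
    · exact ha
    · obtain ⟨O, -, rfl⟩ := Finset.mem_image.1 hb
      exact (hc O).1
  have haX : a ∉ X := by
    intro h
    obtain ⟨O, -, rfl⟩ := Finset.mem_image.1 h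
    exact hC (hc O)
  have hTcard : (Q.A \ insert a X).card + (m + 1) = Q.A.card := by
    rw [← hX, ← Finset.card_insert_of_notMem haX]
    exact Finset.card_sdiff_add_card_eq_card hXA
  have hb := card_bound (Q := Q) (B := Q.A \ insert a X) hg.1
    (fun b hb => hg.2.1 b (Finset.mem_sdiff.1 hb).1) (by
      intro x hx y hy
      refine lift_conn (fun b hb => ?_) (hconn x hx y hy)
      by_cases hbX : b ∈ X
      · obtain ⟨O, -, rfl⟩ := Finset.mem_image.1 hbX
        refine walk hg (hc O) fun d hd hgen hne => ?_
        simp only [Finset.mem_coe, Finset.mem_sdiff, Finset.mem_insert, not_or]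
        refine ⟨hd.1, ?_, ?_⟩
        · rintro rfl; exact hC hd
        · intro hdX
          obtain ⟨O', -, rfl⟩ := Finset.mem_image.1 hdX
          apply hne
          congr 1
          apply Subtype.ext
          rw [hcO O, hcO O']
          ext z
          exact ⟨fun h => .trans _ _ _ hgen h, fun h => .trans _ _ _ (.symm _ _ hgen) h⟩
      · refine .single ⟨b, ?_, Or.inl ⟨rfl, rfl⟩⟩
        simp only [Finset.mem_coe, Finset.mem_sdiff, Finset.mem_insert, not_or]
        exact ⟨hb.1, hb.2, hbX⟩)
  omega

end aux

/-- For `𝚫 ∈ 𝒜` and an arrow `α`: `α` is a branch arrow iff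
`α ∉ 𝒞_𝚫`, and `α` is a cycle arrow iff `α ∈ 𝒞_𝚫`. -/
theorem stmt10 (Q : QuivRel) (st : SigmaTau Q) (hA : ClassA Q st)
    (a : ℕ) (ha : a ∈ Q.A) :
    (BranchArrow Q a ↔ ¬ InC Q st a) ∧ (CycleArrow Q a ↔ InC Q st a) := by
  have h : Connected (deleteArrows Q {a}) ↔ InC Q st a :=
    ⟨inC_of_cycle hA ha, cycle_of_inC hA.1⟩
  simp only [BranchArrow, CycleArrow, ha, true_and, h, and_self]

end GentleQuiv
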